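/- Let G be a k-connected (k ≥ 1) finite simple graph with n ≥ 9 vertices, e edges, minimum degree δ ≥ 1, and maximum degree Δ. If Inv(G) ≤ (n − k − 2)/Δ + (1/((k + 2)·Δ³))·( 2(k + 2)·((k + 2)·δ² + e²/(n − k − 2)) − e² − 2(k + 2)·(n − k − 2)·Δ² ), then G is traceable. -/

import Mathlib

open Finset

/-- The first Zagreb index of a graph: the sum of the squares of the vertex degrees. -/
def zagreb1 {V : Type*} [Fintype V] (G : SimpleGraph V) [DecidableRel G.Adj] : ℝ :=
  ∑ u, (G.degree u : ℝ) ^ 2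

/-- The forgotten topological index of a graph: the sum of the cubes of the vertex degrees. -/
def forgottenIndex {V : Type*} [Fintype V] (G : SimpleGraph V) [DecidableRel G.Adj] : ℝ :=
  ∑ u, (G.degree u : ℝ) ^ 3

/-- The inverse degree of a graph: the sum of the reciprocals of the vertex degrees. -/
noncomputable def invDegree {V : Type*} [Fintype V] (G : SimpleGraph V) [DecidableRel G.Adj] : ℝ :=
  ∑ u, 1 / (G.degree u : ℝ)

/-- The independence number of a graph: the largest cardinality of a set of pairwise
nonadjacent vertices. -/
noncomputable def indepNum {V : Type*} [Fintype V] (G : SimpleGraph V) : ℕ :=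
  sSup {k | ∃ s : Finset V, s.card = k ∧ ∀ u ∈ s, ∀ v ∈ s, ¬ G.Adj u v}

/-- A graph is a regular balanced bipartite graph if its vertices can be partitioned into
two parts of equal size with every edge joining the two parts, and all vertices have the
same degree. -/
def IsRegularBalancedBipartite {V : Type*} [Fintype V] (G : SimpleGraph V) [DecidableRel G.Adj] : Prop :=
  ∃ (A : Finset V) (r : ℕ), 2 * A.card = Fintype.card V ∧
    (∀ u v, G.Adj u v → (u ∈ A ↔ v ∉ A)) ∧ G.IsRegularOfDegree r

/-- A graph is `k`-connected if it has more than `k` vertices and removing any set of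
fewer than `k` vertices leaves a connected graph. -/
def IsKConnected {V : Type*} [Fintype V] (G : SimpleGraph V) (k : ℕ) : Prop :=
  k < Fintype.card V ∧
    ∀ S : Finset V, S.card < k → (G.induce (↑S : Set V)ᶜ).Connected

/-- A graph is traceable if it has a Hamiltonian path. -/
def IsTraceable {V : Type*} [DecidableEq V] (G : SimpleGraph V) : Prop :=
  ∃ (u v : V) (p : G.Walk u v), p.IsHamiltonian

/-- A list of distinct vertices, consecutive ones adjacent, of the largest possible length. -/
structure IsLongestPath {V : Type*} (G : SimpleGraph V) (P : List V) : Prop where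
  isChain : P.IsChain G.Adj
  nodup : P.Nodup
  length_le : ∀ Q : List V, Q.IsChain G.Adj → Q.Nodup → Q.length ≤ P.length

/-- There is a nonempty path outside `P` that starts at a neighbour of `y` and ends at a
neighbour of `z`. -/
def HasBridge {V : Type*} (G : SimpleGraph V) (P : List V) (y z : V) : Prop :=
  ∃ q : List V, q ≠ [] ∧ q.IsChain G.Adj ∧ q.Nodup ∧ (∀ v ∈ q, v ∉ P) ∧
    (∀ a ∈ q.head?, G.Adj y a) ∧ ∀ b ∈ q.getLast?, G.Adj b z

/-- The vertices `h` and `c` lie in the same component of the graph obtained by deleting `P`. -/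
def OffReachable {V : Type*} (G : SimpleGraph V) (P : List V) (h c : V) : Prop :=
  ∃ (hh : h ∉ P) (hc : c ∉ P), (G.induce {v | v ∉ P}).Reachable ⟨h, hh⟩ ⟨c, hc⟩

/-- The vertices of `P` adjacent to the component of `h` outside `P`. -/
def attachments {V : Type*} (G : SimpleGraph V) (P : List V) (h : V) : Set V :=
  {y | y ∈ P ∧ ∃ c, OffReachable G P h c ∧ G.Adj y c}

lemma exists_isLongestPath {V : Type*} [Fintype V] (G : SimpleGraph V) :
    ∃ P, IsLongestPath G P := by
  classical
  let p : ℕ → Prop := fun m ↦ ∃ Q : List V, Q.IsChain G.Adj ∧ Q.Nodup ∧ Q.length = m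
  have h0 : p 0 := ⟨[], by simp, by simp, rfl⟩
  obtain ⟨P, hc, hn, hl⟩ := Nat.findGreatest_spec (P := p) (Nat.zero_le (Fintype.card V)) h0
  refine ⟨P, hc, hn, fun Q hQ hQn ↦ ?_⟩
  rw [hl]
  exact Nat.le_findGreatest hQn.length_le_card ⟨Q, hQ, hQn, rfl⟩

lemma isTraceable_of_forall_mem {V : Type*} [DecidableEq V] [Nonempty V] {G : SimpleGraph V}
    {P : List V} (hc : P.IsChain G.Adj) (hn : P.Nodup) (hall : ∀ v, v ∈ P) : IsTraceable G := by
  have hne : P ≠ [] := List.ne_nil_of_mem (hall (Classical.arbitrary V))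
  refine ⟨_, _, SimpleGraph.Walk.ofSupport P hne hc, fun v ↦ ?_⟩
  rw [SimpleGraph.Walk.support_ofSupport]
  exact List.count_eq_one_of_mem hn (hall v)

lemma isChain_adj_reverse {V : Type*} {G : SimpleGraph V} {l : List V} (h : l.IsChain G.Adj) :
    l.reverse.IsChain G.Adj :=
  List.isChain_reverse.2 (h.imp fun _ _ hab ↦ hab.symm)

namespace IsLongestPath

variable {V : Type*} {G : SimpleGraph V} {P : List V}

lemma ne_nil [Nonempty V] (hP : IsLongestPath G P) : P ≠ [] := by
  rintro rfl
  simpa using hP.length_le [Classical.arbitrary V] (by simp) (by simp)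

lemma false_of_perm (hP : IsLongestPath G P) {Q q : List V} (hQ : Q.IsChain G.Adj)
    (hperm : Q.Perm (q ++ P)) (hq : q ≠ []) (hqn : q.Nodup) (hqP : ∀ v ∈ q, v ∉ P) : False := by
  have hn : (q ++ P).Nodup := List.nodup_append'.2 ⟨hqn, hP.nodup, fun v hv hv' ↦ hqP v hv hv'⟩
  have := hP.length_le Q hQ (hperm.nodup_iff.2 hn)
  rw [hperm.length_eq, List.length_append] at this
  have := List.length_pos_iff.2 hq
  omega

lemma not_adj_head (hP : IsLongestPath G P) {x c : V} (hx : x ∈ P.head?) (hc : c ∉ P) :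
    ¬ G.Adj x c := by
  intro hadj
  refine hP.false_of_perm (Q := [c] ++ P) (q := [c]) ?_ (List.Perm.refl _) (by simp) (by simp)
    (by simpa using hc)
  refine List.IsChain.append (by simp) hP.isChain fun a ha b hb ↦ ?_
  obtain rfl : c = a := by simpa using ha
  obtain rfl : x = b := Option.mem_unique hx hb
  exact hadj.symm

lemma not_adj_last (hP : IsLongestPath G P) {x c : V} (hx : x ∈ P.getLast?) (hc : c ∉ P) :
    ¬ G.Adj x c := by
  intro hadj
  refine hP.false_of_perm (Q := P ++ [c]) (q := [c]) ?_ List.perm_append_comm (by simp) (by simp)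
    (by simpa using hc)
  refine List.IsChain.append hP.isChain (by simp) fun a ha b hb ↦ ?_
  obtain rfl : c = b := by simpa using hb
  obtain rfl : x = a := Option.mem_unique hx ha
  exact hadj

lemma not_hasBridge_of_append (hP : IsLongestPath G P) {A B : List V} {y z : V}
    (hAB : P = A ++ B) (hy : y ∈ A.getLast?) (hz : z ∈ B.head?) : ¬ HasBridge G P y z := by
  rintro ⟨q, hq, hqc, hqn, hqP, hqy, hqz⟩
  have hPc := hP.isChain
  rw [hAB] at hPc
  refine hP.false_of_perm (Q := A ++ (q ++ B)) ?_ ?_ hq hqn hqP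
  · refine hPc.left_of_append.append (hqc.append hPc.right_of_append ?_) ?_
    · intro b hb z' hz'
      obtain rfl := Option.mem_unique hz hz'
      exact hqz b hb
    · intro y' hy' a ha
      obtain rfl := Option.mem_unique hy hy'
      rw [List.head?_append_of_ne_nil _ hq] at ha
      exact hqy a ha
  · rw [hAB]
    exact List.perm_append_comm_assoc _ _ _

lemma not_adj_of_hasBridge (hP : IsLongestPath G P) {A M B : List V} {y z y' z' : V}
    (hAB : P = A ++ (M ++ B)) (hy : y ∈ A.getLast?) (hz : z ∈ M.head?) (hy' : y' ∈ M.getLast?)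
    (hz' : z' ∈ B.head?) (hbr : HasBridge G P y y') : ¬ G.Adj z z' := by
  obtain ⟨q, hq, hqc, hqn, hqP, hqy, hqz⟩ := hbr
  intro hadj
  have hPc := hP.isChain
  rw [hAB] at hPc
  have hM : M ≠ [] := by rintro rfl; simp at hz
  refine hP.false_of_perm (Q := A ++ (q ++ (M.reverse ++ B))) ?_ ?_ hq hqn hqP
  · have hMB := hPc.right_of_append
    refine hPc.left_of_append.append (hqc.append
      ((isChain_adj_reverse hMB.left_of_append).append hMB.right_of_append ?_) ?_) ?_
    · intro a ha b hb
      rw [List.getLast?_reverse] at ha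
      obtain rfl := Option.mem_unique hz ha
      obtain rfl := Option.mem_unique hz' hb
      exact hadj
    · intro a ha b hb
      rw [List.head?_append_of_ne_nil _ (by simpa using hM), List.head?_reverse] at hb
      obtain rfl := Option.mem_unique hy' hb
      exact hqz a ha
    · intro a ha b hb
      rw [List.head?_append_of_ne_nil _ hq] at hb
      obtain rfl := Option.mem_unique hy ha
      exact hqy b hb
  · rw [hAB]
    refine (List.perm_append_comm_assoc _ _ _).trans (List.Perm.append_left _ ?_)
    exact List.Perm.append_left _ ((List.reverse_perm M).append_right _)

lemma not_adj_head_of_append (hP : IsLongestPath G P) {A B : List V} {x y z c : V}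
    (hAB : P = A ++ B) (hx : x ∈ A.head?) (hy : y ∈ A.getLast?) (hz : z ∈ B.head?)
    (hc : c ∉ P) (hyc : G.Adj y c) : ¬ G.Adj x z := by
  intro hadj
  have hPc := hP.isChain
  rw [hAB] at hPc
  have hA : A ≠ [] := by rintro rfl; simp at hx
  refine hP.false_of_perm (Q := [c] ++ (A.reverse ++ B)) (q := [c]) ?_ ?_ (by simp) (by simp)
    (by simpa using hc)
  · refine List.IsChain.append (by simp)
      ((isChain_adj_reverse hPc.left_of_append).append hPc.right_of_append ?_) ?_
    · intro a ha b hb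
      rw [List.getLast?_reverse] at ha
      obtain rfl := Option.mem_unique hx ha
      obtain rfl := Option.mem_unique hz hb
      exact hadj
    · intro a ha b hb
      rw [List.head?_append_of_ne_nil _ (by simpa using hA), List.head?_reverse] at hb
      obtain rfl := Option.mem_unique hy hb
      obtain rfl : c = a := by simpa using ha
      exact hyc.symm
  · rw [hAB]
    exact List.Perm.append_left _ ((List.reverse_perm A).append_right _)

end IsLongestPath

lemma OffReachable.trans_adj {V : Type*} {G : SimpleGraph V} {P : List V} {h c d : V}
    (hc : OffReachable G P h c) (hadj : G.Adj c d) (hd : d ∉ P) : OffReachable G P h d := by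
  obtain ⟨hh, hcP, hr⟩ := hc
  refine ⟨hh, hd, hr.trans (SimpleGraph.Adj.reachable ?_)⟩
  simpa using hadj

lemma hasBridge_of_mem_attachments {V : Type*} {G : SimpleGraph V} {P : List V} {h y z : V}
    (hy : y ∈ attachments G P h) (hz : z ∈ attachments G P h) : HasBridge G P y z := by
  classical
  obtain ⟨-, c, ⟨hh, hc, hrc⟩, hyc⟩ := hy
  obtain ⟨-, d, ⟨_, hd, hrd⟩, hzd⟩ := hz
  obtain ⟨w, hw⟩ := (hrc.symm.trans hrd).exists_isPath
  let f := (SimpleGraph.Embedding.induce (G := G) {v | v ∉ P}).toHom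
  have hwf : (w.map f).IsPath := hw.map Subtype.val_injective
  refine ⟨(w.map f).support, SimpleGraph.Walk.support_ne_nil _,
    SimpleGraph.Walk.isChain_adj_support _, hwf.support_nodup, ?_, ?_, ?_⟩
  · intro v hv
    rw [SimpleGraph.Walk.support_map, List.mem_map] at hv
    obtain ⟨v', -, rfl⟩ := hv
    exact v'.2
  · intro a ha
    rw [List.head?_eq_some_head (SimpleGraph.Walk.support_ne_nil _),
      SimpleGraph.Walk.head_support] at ha
    obtain rfl : c = a := by simpa [f] using ha
    exact hyc
  · intro a ha
    rw [List.getLast?_eq_some_getLast (SimpleGraph.Walk.support_ne_nil _),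
      SimpleGraph.Walk.getLast_support] at ha
    obtain rfl : d = a := by simpa [f] using ha
    exact hzd.symm

lemma le_ncard_attachments {V : Type*} [Fintype V] {G : SimpleGraph V} {P : List V} {k : ℕ}
    (hconn : IsKConnected G k) {h x : V} (hh : h ∉ P) (hx : x ∈ P)
    (hxN : x ∉ attachments G P h) : k ≤ (attachments G P h).ncard := by
  classical
  by_contra! hlt
  rw [Set.ncard_eq_toFinset_card'] at hlt
  have hcon := hconn.2 _ hlt
  have hhN : h ∉ attachments G P h := fun hm ↦ hh hm.1
  obtain ⟨w⟩ := hcon.preconnected ⟨h, by simpa using hhN⟩ ⟨x, by simpa using hxN⟩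
  have key : ∀ {a b} (w : (G.induce ((attachments G P h).toFinset : Set V)ᶜ).Walk a b),
      OffReachable G P h a → OffReachable G P h b := by
    intro a b w
    induction w with
    | nil => exact id
    | @cons u v w hadj p ih =>
      intro hu
      have hadj' : G.Adj u v := by simpa using hadj
      refine ih (hu.trans_adj hadj' fun hv ↦ ?_)
      have := v.2
      simp only [Set.coe_toFinset, Set.mem_compl_iff] at this
      exact this ⟨hv, u, hu, hadj'.symm⟩
  obtain ⟨-, hxP, -⟩ := key w ⟨hh, hh, .refl _⟩
  exact hxP hx

namespace IsLongestPath

variable {V : Type*} {G : SimpleGraph V} {P : List V}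

lemma head_notMem_attachments (hP : IsLongestPath G P) {x h : V} (hx : x ∈ P.head?) :
    x ∉ attachments G P h := by
  rintro ⟨-, c, ⟨-, hc, -⟩, hadj⟩
  exact hP.not_adj_head hx hc hadj

lemma succ_lt_length_of_mem_attachments (hP : IsLongestPath G P) {i : ℕ} {y h : V}
    (hi : P[i]? = some y) (hy : y ∈ attachments G P h) : i + 1 < P.length := by
  obtain ⟨-, c, ⟨-, hc, -⟩, hadj⟩ := hy
  obtain ⟨hlt, -⟩ := List.getElem?_eq_some_iff.1 hi
  by_contra hge
  refine hP.not_adj_last ?_ hc hadj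
  rw [List.getLast?_eq_getElem?, show P.length - 1 = i by omega, hi]
  rfl

lemma mem_getLast?_take {i : ℕ} {y : V} (hi : P[i]? = some y) :
    y ∈ (P.take (i + 1)).getLast? := by
  simp [List.getLast?_take, hi]

lemma succ_notMem_attachments (hP : IsLongestPath G P) {i : ℕ} {y z h : V}
    (hi : P[i]? = some y) (hz : P[i + 1]? = some z) (hy : y ∈ attachments G P h) :
    z ∉ attachments G P h := fun hzN ↦
  hP.not_hasBridge_of_append (List.take_append_drop (i + 1) P).symm (mem_getLast?_take hi)
    (by simp [hz]) (hasBridge_of_mem_attachments hy hzN)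

lemma not_adj_head_succ (hP : IsLongestPath G P) {i : ℕ} {x y z h : V} (hx : x ∈ P.head?)
    (hi : P[i]? = some y) (hz : P[i + 1]? = some z) (hy : y ∈ attachments G P h) :
    ¬ G.Adj x z := by
  obtain ⟨-, c, ⟨-, hc, -⟩, hadj⟩ := hy
  exact hP.not_adj_head_of_append (List.take_append_drop (i + 1) P).symm
    (by simpa [List.head?_take] using hx) (mem_getLast?_take hi) (by simp [hz]) hc hadj

lemma not_adj_succ_succ (hP : IsLongestPath G P) {i j : ℕ} (hij : i < j) {y z y' z' h : V}
    (hi : P[i]? = some y) (hz : P[i + 1]? = some z) (hj : P[j]? = some y')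
    (hz' : P[j + 1]? = some z') (hy : y ∈ attachments G P h) (hy' : y' ∈ attachments G P h) :
    ¬ G.Adj z z' := by
  refine hP.not_adj_of_hasBridge (A := P.take (i + 1)) (M := (P.drop (i + 1)).take (j - i))
    (B := (P.drop (i + 1)).drop (j - i)) ?_ (mem_getLast?_take hi) ?_ ?_ ?_
    (hasBridge_of_mem_attachments hy hy')
  · simp only [List.take_append_drop]
  · simp [List.head?_take, hz, show j - i ≠ 0 by omega]
  · obtain ⟨m, rfl⟩ : ∃ m, j = i + 1 + m := ⟨j - (i + 1), by omega⟩
    rw [show i + 1 + m - i = m + 1 by omega]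
    exact mem_getLast?_take (by simp [hj])
  · rw [List.drop_drop, show i + 1 + (j - i) = j + 1 by omega]
    simp [hz']

/-- In a `k`-connected graph, the first vertex of a longest path and a vertex outside the path
lie in a common independent set of size `k + 2`. -/
lemma exists_independent [Fintype V] (hP : IsLongestPath G P) {k : ℕ}
    (hconn : IsKConnected G k) {x h : V} (hx : x ∈ P.head?) (hh : h ∉ P) :
    ∃ I : Finset V, #I = k + 2 ∧ h ∈ I ∧ x ∈ I ∧ ∀ u ∈ I, ∀ v ∈ I, ¬ G.Adj u v := by
  classical
  have hxP : x ∈ P := List.mem_of_mem_head? hx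
  have hx0 : P[0]? = some x := by rw [← List.head?_eq_getElem?]; exact hx
  have hk := le_ncard_attachments hconn hh hxP (hP.head_notMem_attachments hx)
  let J := (range P.length).filter fun i ↦ ∃ y ∈ attachments G P h, P[i]? = some y
  let S := J.image fun i ↦ P.getD (i + 1) x
  have hS : ∀ z ∈ S, ∃ i y, P[i]? = some y ∧ P[i + 1]? = some z ∧ y ∈ attachments G P h := by
    intro z hz
    obtain ⟨i, hi, rfl⟩ := mem_image.1 hz
    obtain ⟨-, y, hy, hiy⟩ := mem_filter.1 hi
    refine ⟨i, y, hiy, ?_, hy⟩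
    have := hP.succ_lt_length_of_mem_attachments hiy hy
    simp [List.getD_eq_getElem?_getD, this]
  have hJ : (attachments G P h).ncard ≤ #J := by
    rw [Set.ncard_eq_toFinset_card']
    refine (card_le_card (t := J.image fun i ↦ P.getD i x) fun y hy ↦ ?_).trans card_image_le
    rw [Set.mem_toFinset] at hy
    obtain ⟨i, hi, rfl⟩ := List.getElem_of_mem hy.1
    refine mem_image.2 ⟨i, mem_filter.2 ⟨mem_range.2 hi, _, hy, by simp [hi]⟩, ?_⟩
    simp [List.getD_eq_getElem?_getD, hi]
  have hJS : #S = #J := by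
    refine card_image_of_injOn fun i hi j hj hij ↦ ?_
    obtain ⟨-, y, hy, hiy⟩ := mem_filter.1 (mem_coe.1 hi)
    obtain ⟨-, y', hy', hjy⟩ := mem_filter.1 (mem_coe.1 hj)
    have h1 := hP.succ_lt_length_of_mem_attachments hiy hy
    have h2 := hP.succ_lt_length_of_mem_attachments hjy hy'
    simp only [List.getD_eq_getElem?_getD, List.getElem?_eq_getElem h1,
      List.getElem?_eq_getElem h2, Option.getD_some] at hij
    have := (hP.nodup.getElem_inj_iff).1 hij
    omega
  have hxS : x ∉ S := by
    intro hm
    obtain ⟨i, y, -, hi, -⟩ := hS x hm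
    have h0 := (List.getElem?_eq_some_iff.1 hx0)
    have h1 := (List.getElem?_eq_some_iff.1 hi)
    have := (hP.nodup.getElem_inj_iff (hi := h0.1) (hj := h1.1)).1 (h0.2.trans h1.2.symm)
    omega
  have hhS : h ∉ insert x S := by
    intro hm
    rcases mem_insert.1 hm with rfl | hm
    · exact hh hxP
    · obtain ⟨i, y, -, hi, -⟩ := hS h hm
      exact hh (List.mem_of_getElem? hi)
  have hxh : ¬ G.Adj x h := hP.not_adj_head hx hh
  have hhz : ∀ z ∈ S, ¬ G.Adj z h := by
    intro z hz hadj
    obtain ⟨i, y, hi, hiz, hy⟩ := hS z hz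
    exact hP.succ_notMem_attachments hi hiz hy
      ⟨List.mem_of_getElem? hiz, h, ⟨hh, hh, .refl _⟩, hadj⟩
  have hxz : ∀ z ∈ S, ¬ G.Adj x z := by
    intro z hz
    obtain ⟨i, y, hi, hiz, hy⟩ := hS z hz
    exact hP.not_adj_head_succ hx hi hiz hy
  have hzz : ∀ z ∈ S, ∀ z' ∈ S, ¬ G.Adj z z' := by
    intro z hz z' hz' hadj
    obtain ⟨i, y, hi, hiz, hy⟩ := hS z hz
    obtain ⟨j, y', hj, hjz, hy'⟩ := hS z' hz'
    rcases lt_trichotomy i j with hij | rfl | hij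
    · exact hP.not_adj_succ_succ hij hi hiz hj hjz hy hy' hadj
    · rw [hiz] at hjz
      exact hadj.ne (Option.some_injective _ hjz)
    · exact hP.not_adj_succ_succ hij hj hjz hi hiz hy' hy hadj.symm
  have hcard : k + 2 ≤ #(insert h (insert x S)) := by
    rw [card_insert_of_notMem hhS, card_insert_of_notMem hxS]
    omega
  have hpair : #({h, x} : Finset V) ≤ k + 2 := card_le_two.trans (by omega)
  obtain ⟨I, hI1, hI2, hI⟩ := exists_subsuperset_card_eq
    (show ({h, x} : Finset V) ⊆ insert h (insert x S) by
      intro v hv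
      simp only [mem_insert, mem_singleton] at hv ⊢
      tauto) hpair hcard
  refine ⟨I, hI, hI1 (by simp), hI1 (by simp), fun u hu v hv hadj ↦ ?_⟩
  have hu' := hI2 hu
  have hv' := hI2 hv
  simp only [mem_insert] at hu' hv'
  rcases hu' with rfl | rfl | hu' <;> rcases hv' with rfl | rfl | hv'
  · exact hadj.ne rfl
  · exact hxh hadj.symm
  · exact hhz _ hv' hadj.symm
  · exact hxh hadj
  · exact hadj.ne rfl
  · exact hxz _ hv' hadj
  · exact hhz _ hu' hadj
  · exact hxz _ hu' hadj.symm
  · exact hzz _ hu' _ hv' hadj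

end IsLongestPath

/-- A graph whose independent sets of size `k + 2` are all one half of a balanced bipartition is
traceable if it is `k`-connected with `k ≥ 1`. -/
theorem isTraceable_of_independent_balanced {V : Type*} [Fintype V] [DecidableEq V]
    {G : SimpleGraph V} {k : ℕ} (hk : 1 ≤ k) (hconn : IsKConnected G k)
    (hbal : ∀ I : Finset V, #I = k + 2 → (∀ u ∈ I, ∀ v ∈ I, ¬ G.Adj u v) →
      #Iᶜ = k + 2 ∧ ∀ u ∉ I, ∀ v ∉ I, ¬ G.Adj u v) : IsTraceable G := by
  classical
  have hne : Nonempty V := Fintype.card_pos_iff.1 (by have := hconn.1; omega)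
  obtain ⟨P, hP⟩ := exists_isLongestPath G
  by_contra hnt
  obtain ⟨h, hh⟩ : ∃ h, h ∉ P := by
    by_contra! hall
    exact hnt (isTraceable_of_forall_mem hP.isChain hP.nodup hall)
  obtain ⟨x, l, rfl⟩ := List.exists_cons_of_ne_nil hP.ne_nil
  obtain ⟨I, hI, hhI, hxI, hind⟩ := hP.exists_independent hconn (x := x) (by simp) hh
  obtain ⟨hIc, hind'⟩ := hbal I hI hind
  have hpre : ∀ a b : V, Relation.ReflTransGen G.Adj a b := fun a b ↦ by
    have hcon := hconn.2 ∅ (by rw [card_empty]; omega)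
    obtain ⟨w⟩ := hcon.preconnected ⟨a, by simp⟩ ⟨b, by simp⟩
    have := (SimpleGraph.reachable_iff_reflTransGen _ _).1
      ⟨w.map (SimpleGraph.Embedding.induce (G := G) _).toHom⟩
    simpa using this
  have halt : ∀ J : Finset V, (∀ u ∈ J, ∀ v ∈ J, ¬ G.Adj u v) →
      (∀ u ∉ J, ∀ v ∉ J, ¬ G.Adj u v) → ∀ u v, G.Adj u v → (v ∈ J ↔ u ∉ J) :=
    fun J h1 h2 u v hadj ↦
      ⟨fun hv hu ↦ h1 u hu v hv hadj, fun hu ↦ by_contra fun hv ↦ h2 u hu v hv hadj⟩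
  have hoff : ∀ v ∉ I, v ∈ x :: l := by
    intro v hv
    by_contra hvP
    obtain ⟨J, hJ, hvJ, hxJ, hJind⟩ := hP.exists_independent hconn (x := x) (by simp) hvP
    obtain ⟨-, hJind'⟩ := hbal J hJ hJind
    have : v ∈ I ↔ v ∈ J := by
      clear hv hvP hvJ
      induction hpre x v with
      | refl => simp [hxI, hxJ]
      | tail _ hadj ih =>
        rw [halt I hind hind' _ _ hadj, halt J hJind hJind' _ _ hadj, ih]
    exact hv (this.2 hvJ)
  have hcount : ∀ (l : List V) (x : V), x ∈ I → (x :: l).IsChain G.Adj →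
      (x :: l).countP (· ∉ I) ≤ (x :: l).countP (· ∈ I) := by
    intro l
    induction l using List.twoStepInduction with
    | nil => intro x hx; simp [hx]
    | singleton a =>
      intro x hx hc
      simp only [List.isChain_cons_cons] at hc
      have : a ∉ I := fun ha ↦ hind x hx a ha hc.1
      simp [hx, this]
    | cons_cons a b l ih _ =>
      intro x hx hc
      simp only [List.isChain_cons_cons] at hc
      have ha : a ∉ I := fun ha ↦ hind x hx a ha hc.1
      have hb : b ∈ I := (halt I hind hind' _ _ hc.2.1).2 ha
      have := ih b hb hc.2.2
      simp only [List.countP_cons, hx, ha, hb] at this ⊢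
      simp at this ⊢
      omega
  have h1 := hcount l x hxI hP.isChain
  have hle1 : #Iᶜ ≤ (x :: l).countP (· ∉ I) := by
    rw [List.countP_eq_length_filter, ← List.toFinset_card_of_nodup (hP.nodup.filter _)]
    refine card_le_card fun v hv ↦ ?_
    have hv := mem_compl.1 hv
    simpa [hv] using hoff v hv
  have hle2 : (x :: l).countP (· ∈ I) < #I := by
    rw [List.countP_eq_length_filter, ← List.toFinset_card_of_nodup (hP.nodup.filter _)]
    refine card_lt_card ((ssubset_iff_of_subset fun v hv ↦ ?_).2 ⟨h, hhI, fun hm ↦ ?_⟩)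
    · simp only [List.mem_toFinset, List.mem_filter, decide_eq_true_eq] at hv
      exact hv.2
    · simp only [List.mem_toFinset, List.mem_filter] at hm
      exact hh hm.1
  omega

section EdgeCount

variable {V : Type*} [Fintype V] [DecidableEq V] (G : SimpleGraph V) [DecidableRel G.Adj]
  {I : Finset V}

lemma card_biUnion_incidenceFinset (hI : ∀ u ∈ I, ∀ v ∈ I, ¬ G.Adj u v) :
    #(I.biUnion fun v ↦ G.incidenceFinset v) = ∑ v ∈ I, G.degree v := by
  rw [card_biUnion]
  · simp
  · intro u hu v hv huv
    refine Finset.disjoint_left.2 fun e he he' ↦ ?_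
    rw [SimpleGraph.mem_incidenceFinset] at he he'
    exact hI u hu v hv (G.adj_of_mem_incidenceSet huv he he')

lemma biUnion_incidenceFinset_subset :
    (I.biUnion fun v ↦ G.incidenceFinset v) ⊆ G.edgeFinset :=
  biUnion_subset.2 fun v _ ↦ G.incidenceFinset_subset v

lemma card_mul_minDegree_le_card_edgeFinset (hI : ∀ u ∈ I, ∀ v ∈ I, ¬ G.Adj u v) :
    #I * G.minDegree ≤ #G.edgeFinset := by
  refine le_trans ?_ (card_le_card (biUnion_incidenceFinset_subset G (I := I)))
  rw [card_biUnion_incidenceFinset G hI, ← smul_eq_mul]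
  exact card_nsmul_le_sum _ _ _ fun v _ ↦ G.minDegree_le_degree v

lemma not_adj_of_card_edgeFinset_le (hI : ∀ u ∈ I, ∀ v ∈ I, ¬ G.Adj u v)
    (hle : #G.edgeFinset ≤ #I * G.minDegree) : ∀ u ∉ I, ∀ v ∉ I, ¬ G.Adj u v := by
  intro u hu v hv hadj
  have heq := eq_of_subset_of_card_le (biUnion_incidenceFinset_subset G (I := I)) <| by
    rw [card_biUnion_incidenceFinset G hI]
    refine hle.trans ?_
    rw [← smul_eq_mul]
    exact card_nsmul_le_sum _ _ _ fun v _ ↦ G.minDegree_le_degree v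
  have hmem : s(u, v) ∈ G.edgeFinset := by simpa using hadj
  rw [← heq, mem_biUnion] at hmem
  obtain ⟨w, hw, he⟩ := hmem
  rw [SimpleGraph.mem_incidenceFinset] at he
  rcases Sym2.mem_iff.1 he.2 with rfl | rfl
  · exact hu hw
  · exact hv hw

lemma card_edgeFinset_le_card_compl_mul_maxDegree (hI : ∀ u ∈ I, ∀ v ∈ I, ¬ G.Adj u v) :
    #G.edgeFinset ≤ #Iᶜ * G.maxDegree := by
  have hsub : G.edgeFinset ⊆ Iᶜ.biUnion fun v ↦ G.incidenceFinset v := by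
    intro e he
    induction e with
    | _ u v =>
      have hadj : G.Adj u v := by simpa using he
      rw [mem_biUnion]
      by_cases hu : u ∈ I
      · exact ⟨v, mem_compl.2 fun hv ↦ hI u hu v hv hadj, by
          simpa [SimpleGraph.incidenceSet] using hadj⟩
      · exact ⟨u, mem_compl.2 hu, by simpa [SimpleGraph.incidenceSet] using hadj⟩
  refine (card_le_card hsub).trans (card_biUnion_le_card_mul _ _ _ fun v _ ↦ ?_)
  rw [SimpleGraph.card_incidenceFinset_eq_degree]
  exact G.degree_le_maxDegree v

end EdgeCount

lemma card_div_maxDegree_le_invDegree {V : Type*} [Fintype V] (G : SimpleGraph V)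
    [DecidableRel G.Adj] (hδ : 1 ≤ G.minDegree) :
    (Fintype.card V : ℝ) / G.maxDegree ≤ invDegree G := by
  have : ∀ v ∈ univ, 1 / (G.maxDegree : ℝ) ≤ 1 / (G.degree v : ℝ) := fun v _ ↦
    one_div_le_one_div_of_le (by exact_mod_cast hδ.trans (G.minDegree_le_degree v))
      (by exact_mod_cast G.degree_le_maxDegree v)
  have := card_nsmul_le_sum _ _ _ this
  rw [invDegree]
  simpa [div_eq_mul_inv] using this

lemma eq_of_inverse_degree_bound {s t δ D e : ℝ} (hs : 0 < s) (ht : 0 < t) (hδ : 0 < δ)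
    (hD : δ ≤ D) (hse : s * δ ≤ e) (het : e ≤ t * D)
    (h : (s + t) / D ≤ t / D +
      (1 / (s * D ^ 3)) * (2 * s * (s * δ ^ 2 + e ^ 2 / t) - e ^ 2 - 2 * s * t * D ^ 2)) :
    s = t ∧ e = s * δ := by
  have hD0 : 0 < D := hδ.trans_le hD
  have he0 : 0 < e := (mul_pos hs hδ).trans_le hse
  have h1 : s ^ 2 * D ^ 2 ≤ 2 * s * (s * δ ^ 2 + e ^ 2 / t) - e ^ 2 - 2 * s * t * D ^ 2 := by
    have h2 : s / D ≤ (1 / (s * D ^ 3)) *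
        (2 * s * (s * δ ^ 2 + e ^ 2 / t) - e ^ 2 - 2 * s * t * D ^ 2) := by
      rw [add_div] at h
      linarith
    rw [one_div_mul_eq_div, div_le_div_iff₀ hD0 (by positivity)] at h2
    refine le_of_mul_le_mul_right ?_ hD0
    linarith
  have hq : e ^ 2 / t ≤ t * D ^ 2 := by
    rw [div_le_iff₀ ht]
    nlinarith
  have hq' : s * (e ^ 2 / t) ≤ s * (t * D ^ 2) := mul_le_mul_of_nonneg_left hq hs.le
  have hsq : (s * δ) ^ 2 ≤ e ^ 2 := by gcongr
  have hδD : s ^ 2 * δ ^ 2 ≤ s ^ 2 * D ^ 2 := by gcongr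
  have e1 : e ^ 2 = (s * δ) ^ 2 := by nlinarith
  have e2 : s ^ 2 * δ ^ 2 = s ^ 2 * D ^ 2 := by nlinarith
  have e3 : s * (e ^ 2 / t) = s * (t * D ^ 2) := by nlinarith
  have e1' : e = s * δ := by rwa [pow_left_inj₀ he0.le (by positivity) two_ne_zero] at e1
  have e2' : δ = D := by
    have := mul_left_cancel₀ (by positivity) e2
    rwa [pow_left_inj₀ hδ.le hD0.le two_ne_zero] at this
  have e3' := mul_left_cancel₀ hs.ne' e3
  rw [div_eq_iff ht.ne', e1', e2'] at e3'
  have e4 : (s * D) ^ 2 = (t * D) ^ 2 := by linarith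
  rw [pow_left_inj₀ (by positivity) (by positivity) two_ne_zero] at e4
  exact ⟨mul_right_cancel₀ hD0.ne' e4, e1'⟩

/-- If `G` is a `k`-connected (`k ≥ 1`) graph with `n ≥ 9` vertices, `e` edges, minimum degree
`δ ≥ 1`, and maximum degree `Δ`, and
`Inv(G) ≤ (n − k − 2)/Δ + (1/((k+2)Δ³))(2(k+2)((k+2)δ² + e²/(n − k − 2)) − e² − 2(k+2)(n − k − 2)Δ²)`,
then `G` is traceable. -/
theorem stmt15 {V : Type*} [Fintype V] [DecidableEq V] (G : SimpleGraph V) [DecidableRel G.Adj]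
    (k : ℕ) (hk : 1 ≤ k) (hconn : IsKConnected G k) (hn : 9 ≤ Fintype.card V)
    (hδ : 1 ≤ G.minDegree)
    (h : invDegree G ≤ ((Fintype.card V : ℝ) - k - 2) / (G.maxDegree : ℝ)
        + (1 / (((k : ℝ) + 2) * (G.maxDegree : ℝ) ^ 3)) *
          (2 * ((k : ℝ) + 2) * (((k : ℝ) + 2) * (G.minDegree : ℝ) ^ 2
              + (G.edgeFinset.card : ℝ) ^ 2 / ((Fintype.card V : ℝ) - k - 2))
            - (G.edgeFinset.card : ℝ) ^ 2
            - 2 * ((k : ℝ) + 2) * ((Fintype.card V : ℝ) - k - 2) * (G.maxDegree : ℝ) ^ 2)) :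
    IsTraceable G := by
  refine isTraceable_of_independent_balanced hk hconn fun I hI hind ↦ ?_
  obtain ⟨v, hv⟩ : I.Nonempty := card_pos.1 (by omega)
  obtain ⟨w, hw⟩ := (G.degree_pos_iff_exists_adj v).1
    (Nat.lt_of_lt_of_le Nat.zero_lt_one (hδ.trans (G.minDegree_le_degree v)))
  have htpos : 0 < #Iᶜ := card_pos.2 ⟨w, mem_compl.2 fun hwI ↦ hind v hv w hwI hw⟩
  have hsum : #I + #Iᶜ = Fintype.card V := card_add_card_compl I
  have hsI : (#I : ℝ) = k + 2 := by rw [hI]; push_cast; ring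
  have htI : (Fintype.card V : ℝ) - k - 2 = #Iᶜ := by rw [← hsum]; push_cast; linarith
  have hDδ : G.minDegree ≤ G.maxDegree :=
    (G.minDegree_le_degree v).trans (G.degree_le_maxDegree v)
  have hle := (card_div_maxDegree_le_invDegree G hδ).trans h
  rw [htI, ← hsI, ← hsum, Nat.cast_add] at hle
  obtain ⟨hst, he⟩ := eq_of_inverse_degree_bound (by rw [hsI]; positivity)
    (by exact_mod_cast htpos) (by exact_mod_cast hδ) (by exact_mod_cast hDδ)
    (by exact_mod_cast card_mul_minDegree_le_card_edgeFinset G hind)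
    (by exact_mod_cast card_edgeFinset_le_card_compl_mul_maxDegree G hind) hle
  refine ⟨?_, not_adj_of_card_edgeFinset_le G hind (by exact_mod_cast he.le)⟩
  rw [← hI]
  exact_mod_cast hst.symm
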